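/- arXiv:1903.06114 — 2 statements merged into one kernel-verified Lean document; each statement's English description precedes it below -/
import Mathlib

section
/- Let p ≥ 1 and m = k·2^z with k odd. Let j be an integer with 1 ≤ j ≤ k−1, let x ∈ ZMod 2, and let ℓ be an integer with 0 ≤ ℓ ≤ 2^z−1. Then for all n ∈ ℕ and all e < 2^{pn}: [m divides 2^{pn}·j + e and s((2^{pn}·j + e)/m) = x] if and only if [m divides 2^{pn}·(j + k·ℓ) + e and s((2^{pn}·(j + k·ℓ) + e)/m) = x + s(ℓ)]. [This shows that in the projected automaton Π(A_{m,2^p} × A_{T,2^p}) the states (j, X) and (j + kℓ, X_ℓ) accept the same language.] -/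
/-- The parity (in `ZMod 2`) of the number of 1s in the binary expansion of `n`. -/
def sTM (n : ℕ) : ZMod 2 := ((Nat.digits 2 n).count 1 : ZMod 2)

theorem sTM_even (n : ℕ) : sTM (2 * n) = sTM n := by
  rcases Nat.eq_zero_or_pos n with h | h
  · subst h; rfl
  · have : Nat.digits 2 (2 * n) = 0 :: Nat.digits 2 n := by
      have := Nat.digits_add 2 (by norm_num) 0 n (by norm_num) (Or.inr h.ne')
      simpa using this
    simp [sTM, this]

theorem sTM_odd (n : ℕ) : sTM (2 * n + 1) = sTM n + 1 := by
  have : Nat.digits 2 (2 * n + 1) = 1 :: Nat.digits 2 n := by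
    have := Nat.digits_add 2 (by norm_num) 1 n (by norm_num) (Or.inl one_ne_zero)
    rw [add_comm]; exact this
  unfold sTM; rw [this]; simp

theorem sTM_concat (l : ℕ) : ∀ a q : ℕ, q < 2 ^ a → sTM (q + 2 ^ a * l) = sTM q + sTM l := by
  intro a
  induction a with
  | zero =>
    intro q hq
    have : q = 0 := by simpa using hq
    subst this
    simp [sTM]
  | succ a ih =>
    intro q hq
    rw [pow_succ] at hq
    obtain ⟨r, hr⟩ := Nat.even_or_odd' q
    have h := ih r (by omega)
    rcases hr with hr | hr
    · have e : q + 2 ^ (a + 1) * l = 2 * (r + 2 ^ a * l) := by rw [hr]; ring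
      rw [e, hr, sTM_even, sTM_even, h]
    · have e : q + 2 ^ (a + 1) * l = 2 * (r + 2 ^ a * l) + 1 := by rw [hr]; ring
      rw [e, hr, sTM_odd, sTM_odd, h]; ring

theorem class_jX_indistinguishable (p m k z : ℕ) (hp : 1 ≤ p) (hkodd : Odd k)
    (hm : m = k * 2 ^ z)
    (j : ℕ) (hj1 : 1 ≤ j) (hj2 : j ≤ k - 1) (x : ZMod 2)
    (ℓ : ℕ) (hℓ : ℓ ≤ 2 ^ z - 1) :
    ∀ n e : ℕ, e < 2 ^ (p * n) →
      ((m ∣ 2 ^ (p * n) * j + e ∧ sTM ((2 ^ (p * n) * j + e) / m) = x) ↔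
       (m ∣ 2 ^ (p * n) * (j + k * ℓ) + e ∧
         sTM ((2 ^ (p * n) * (j + k * ℓ) + e) / m) = x + sTM ℓ)) := by
  intro n e he
  generalize p * n = N at he ⊢
  have hk : j + 1 ≤ k := by omega
  have hlt : 2 ^ N * j + e < 2 ^ N * k :=
    calc 2 ^ N * j + e < 2 ^ N * (j + 1) := by rw [mul_add]; omega
      _ ≤ 2 ^ N * k := Nat.mul_le_mul_left _ hk
  have hmpos : 0 < m := by rw [hm]; exact Nat.mul_pos (by omega) (by positivity)
  by_cases hz : z ≤ N
  · obtain ⟨a, rfl⟩ := Nat.exists_eq_add_of_le hz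
    have e1 : 2 ^ (z + a) * (j + k * ℓ) + e = (2 ^ (z + a) * j + e) + m * (2 ^ a * ℓ) := by
      rw [hm, pow_add]; ring
    rw [e1, Nat.add_mul_div_left _ _ hmpos, Nat.dvd_add_left (dvd_mul_right _ _),
      sTM_concat, add_left_inj]
    rw [Nat.div_lt_iff_lt_mul hmpos, hm]
    calc _ < _ := hlt
      _ = _ := by rw [pow_add]; ring
  · have hNz : N + 1 ≤ z := by omega
    have key : ∀ t, ¬ m ∣ 2 ^ N * (j + k * t) + e := by
      intro t h
      have h2 : 2 ^ N ∣ e := by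
        have h3 : 2 ^ N ∣ m := by
          rw [hm]; exact Dvd.dvd.mul_left (pow_dvd_pow 2 (by omega)) k
        exact (Nat.dvd_add_right (dvd_mul_right _ _)).1 (h3.trans h)
      have e0 : e = 0 := Nat.eq_zero_of_dvd_of_lt h2 he
      subst e0
      have h4 : k ∣ 2 ^ N * (j + k * t) := by
        have : k ∣ m := by rw [hm]; exact dvd_mul_right _ _
        simpa using this.trans h
      have hc : Nat.Coprime k (2 ^ N) :=
        (Nat.coprime_two_right.2 hkodd).pow_right N
      have h5 := hc.dvd_of_dvd_mul_left h4
      have h6 : k ∣ j := (Nat.dvd_add_left (dvd_mul_right _ _)).1 h5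
      have := Nat.le_of_dvd (by omega) h6
      omega
    have k0 := key 0
    rw [mul_zero, add_zero] at k0
    exact iff_of_false (fun h => k0 h.1) (fun h => key ℓ h.1)
end

section
/- Let b ≥ 2 and m ≥ 1 be integers and let X ⊆ ℕ. If the language {w : word over {0,…,b−1} | val_b(w) ∈ X} is regular, then the language {w : word over {0,…,b−1} | val_b(w) ∈ m·X} is regular. That is, multiplication by a constant preserves b-recognizability. -/
/-- The value of a word over `{0,…,b-1}` (most significant digit first) in base `b`. -/
def valb (b : ℕ) (w : List (Fin b)) : ℕ := w.foldl (fun a d => b * a + d.val) 0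

theorem valb_append_singleton (b : ℕ) (w : List (Fin b)) (d : Fin b) :
    valb b (w ++ [d]) = b * valb b w + d.val := by
  simp [valb]

theorem division_digit_lt {b m r d : ℕ} (hr : r < m) (hd : d < b) : (b * r + d) / m < b := by
  rw [Nat.div_lt_iff_lt_mul (by omega)]
  have : b * (r + 1) ≤ b * m := Nat.mul_le_mul_left b hr
  rw [Nat.mul_add] at this
  omega

/-- The long-division automaton. -/
def divisionDFA {b m : ℕ} {σ : Type*} (hm : 1 ≤ m) (M : DFA (Fin b) σ) :
    DFA (Fin b) (σ × Fin m) where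
  step s d := (M.step s.1 ⟨(b * s.2.val + d.val) / m, division_digit_lt s.2.isLt d.isLt⟩,
    ⟨(b * s.2.val + d.val) % m, Nat.mod_lt _ hm⟩)
  start := (M.start, ⟨0, hm⟩)
  accept := {s | s.1 ∈ M.accept ∧ s.2.val = 0}

theorem divisionDFA_eval {b m : ℕ} {σ : Type*} (hm : 1 ≤ m) (M : DFA (Fin b) σ)
    (w : List (Fin b)) :
    ∃ u : List (Fin b), ((divisionDFA hm M).eval w).1 = M.eval u ∧
      valb b w = m * valb b u + ((divisionDFA hm M).eval w).2.val := by
  induction w using List.reverseRecOn with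
  | nil => exact ⟨[], rfl, by simp [valb, divisionDFA]⟩
  | append_singleton w d ih =>
    obtain ⟨u, h1, h2⟩ := ih
    rw [DFA.eval_append_singleton]
    generalize (divisionDFA hm M).eval w = s at h1 h2
    refine ⟨u ++ [⟨(b * s.2.val + d.val) / m, division_digit_lt s.2.isLt d.isLt⟩], ?_, ?_⟩
    · rw [DFA.eval_append_singleton, ← h1]; rfl
    · rw [valb_append_singleton, valb_append_singleton, h2]
      have := Nat.div_add_mod (b * s.2.val + d.val) m
      simp only [divisionDFA]
      linarith [this, Nat.mul_left_comm b m (valb b u)]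

theorem mul_const_preserves_recognizability (b m : ℕ) (hb : 2 ≤ b) (hm : 1 ≤ m)
    (X : Set ℕ)
    (hX : Language.IsRegular {w : List (Fin b) | valb b w ∈ X}) :
    Language.IsRegular {w : List (Fin b) | valb b w ∈ (fun x => m * x) '' X} := by
  obtain ⟨σ, _, M, hM⟩ := hX
  refine ⟨σ × Fin m, inferInstance, divisionDFA hm M, ?_⟩
  ext w
  obtain ⟨u, h1, h2⟩ := divisionDFA_eval hm M w
  have hu : M.eval u ∈ M.accept ↔ valb b u ∈ X := by
    rw [← DFA.mem_accepts, hM]; rfl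
  rw [DFA.mem_accepts]
  change (((divisionDFA hm M).eval w).1 ∈ M.accept ∧ ((divisionDFA hm M).eval w).2.val = 0) ↔
    ∃ x, x ∈ X ∧ m * x = valb b w
  rw [h1, hu]
  have hlt := ((divisionDFA hm M).eval w).2.isLt
  generalize ((divisionDFA hm M).eval w).2.val = r at h2 hlt
  constructor
  · rintro ⟨hx, h0⟩
    exact ⟨_, hx, by omega⟩
  · rintro ⟨x, hx, he⟩
    have hr : r = 0 := by
      have : m ∣ r := (Nat.dvd_add_right (Dvd.intro _ rfl)).1 (h2 ▸ Dvd.intro _ he)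
      exact Nat.eq_zero_of_dvd_of_lt this hlt
    have : x = valb b u := Nat.eq_of_mul_eq_mul_left hm (by omega)
    exact ⟨this ▸ hx, hr⟩
end
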